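/- Let p, q ∈ M_1 with p ≠ 1, q ≠ 1 and p ≠ q, and suppose v_1 := p·x = q·y, v_2 := p·w = q·z and v_3 := p·u = q·v for some letters x, y, w, z, u, v ∈ X_1. Then v_1, v_2 and v_3 are intersection bases, and v_1 = v_3 or v_2 = v_3 or v_1 = v_2. -/

import Mathlib

namespace Malcev

/-- The alphabet `X_n`: letters `a, b, c, d` together with `A_i, B_i, C_i, D_i`
for `i` ranging over `Fin n` (so `A ⟨0, _⟩` represents `A_1`, etc.). -/
inductive Letter (n : ℕ) : Type
  | a | b | c | d
  | A (i : Fin n) | B (i : Fin n) | C (i : Fin n) | D (i : Fin n)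
  deriving DecidableEq

open FreeMonoid

/-- The defining relations `ρ_n`. -/
inductive rel (n : ℕ) : FreeMonoid (Letter n) → FreeMonoid (Letter n) → Prop
  | da (h : 0 < n) :
      rel n (of .d * of .a) (of (.A ⟨0, h⟩) * of (.C ⟨0, h⟩))
  | AD (i : ℕ) (h : i + 1 < n) :
      rel n (of (.A ⟨i, Nat.lt_of_succ_lt h⟩) * of (.D ⟨i, Nat.lt_of_succ_lt h⟩))
            (of (.A ⟨i + 1, h⟩) * of (.C ⟨i + 1, h⟩))
  | An (h : 0 < n) :
      rel n (of (.A ⟨n - 1, Nat.sub_lt h Nat.one_pos⟩) * of (.D ⟨n - 1, Nat.sub_lt h Nat.one_pos⟩))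
            (of .d * of .b)
  | cb (h : 0 < n) :
      rel n (of .c * of .b)
            (of (.B ⟨n - 1, Nat.sub_lt h Nat.one_pos⟩) * of (.D ⟨n - 1, Nat.sub_lt h Nat.one_pos⟩))
  | BC (i : ℕ) (h : i + 1 < n) :
      rel n (of (.B ⟨i + 1, h⟩) * of (.C ⟨i + 1, h⟩))
            (of (.B ⟨i, Nat.lt_of_succ_lt h⟩) * of (.D ⟨i, Nat.lt_of_succ_lt h⟩))

/-- The congruence on the free monoid generated by `ρ_n`. -/
def Mcon (n : ℕ) : Con (FreeMonoid (Letter n)) := conGen (rel n)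

/-- The presented monoid `M_n = Mon⟨X_n | ρ_n⟩`. -/
abbrev Mn (n : ℕ) : Type := (Mcon n).Quotient

/-- The quotient (natural) map `X_n* → M_n`. -/
def mk (n : ℕ) : FreeMonoid (Letter n) →* Mn n := (Mcon n).mk'

/-- The image in `M_n` of a single letter. -/
def gen {n : ℕ} (x : Letter n) : Mn n := mk n (of x)

/-- The image in `M_n` of a word (given as a list of letters). -/
def word {n : ℕ} (w : List (Letter n)) : Mn n := mk n (ofList w)

/-- The set `P_n = {c, d, A_1, …, A_n, B_1, …, B_n}`. -/
def inP {n : ℕ} : Letter n → Prop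
  | .c => True | .d => True | .A _ => True | .B _ => True | _ => False

/-- The set `Q_n = {a, b, C_1, …, C_n, D_1, …, D_n}`. -/
def inQ {n : ℕ} : Letter n → Prop
  | .a => True | .b => True | .C _ => True | .D _ => True | _ => False

/-- `inR x y` means the two-letter word `xy` belongs to
`R_n = {db, A_1C_1, …, A_nC_n, B_1D_1, …, B_nD_n}`. -/
def inR {n : ℕ} : Letter n → Letter n → Prop
  | .d, .b => True
  | .A i, .C j => i = j
  | .B i, .D j => i = j
  | _, _ => False

/-- `inL x y` means the two-letter word `xy` belongs to
`L_n = {cb, da, A_1D_1, …, A_nD_n, B_2C_2, …, B_nC_n}`. -/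
def inL {n : ℕ} : Letter n → Letter n → Prop
  | .c, .b => True
  | .d, .a => True
  | .A i, .D j => i = j
  | .B i, .C j => i = j ∧ 1 ≤ i.val
  | _, _ => False

/-- A word is in left normal form if no two consecutive letters form a word in `R_n`. -/
def LeftNormal {n : ℕ} (w : List (Letter n)) : Prop :=
  List.Chain' (fun x y => ¬ inR x y) w

/-- `v ∈ M_n` is an intersection base if some word `a_1 ⋯ a_m` (`m ≥ 2`) in left
normal form equals `v` in `M_n` and its final two letters form a word in `L_n`. -/
def IsIntersectionBase {n : ℕ} (v : Mn n) : Prop :=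
  ∃ (w : List (Letter n)) (x y : Letter n),
    LeftNormal (w ++ [x, y]) ∧ word (w ++ [x, y]) = v ∧ inL x y

/-- The principal right ideal `pM_n`. -/
def rIdeal {n : ℕ} (p : Mn n) : Set (Mn n) := {x | ∃ m, x = p * m}


/-- Append the letter `x` to the word whose reversal is `l`, replacing a resulting final factor
in `R_1` by the equal two-letter word in `L_1`. -/
def push : List (Letter 1) → Letter 1 → List (Letter 1)
  | .A _ :: l, .C _ => .a :: .d :: l
  | .d :: l, .b => .D 0 :: .A 0 :: l
  | .B _ :: l, .D _ => .b :: .c :: l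
  | l, x => x :: l

/-- The right action of `X_1*` on reversed words by `push`. -/
def pushHom : FreeMonoid (Letter 1) →* (Function.End (List (Letter 1)))ᵐᵒᵖ :=
  FreeMonoid.lift fun x => MulOpposite.op fun l => push l x

theorem mcon_le_ker_pushHom : Mcon 1 ≤ Con.ker pushHom := by
  refine Con.conGen_le.2 fun v w h => ?_
  rw [Con.ker_rel]
  cases h with
  | AD i h => omega
  | BC i h => omega
  | _ =>
    apply MulOpposite.unop_injective
    funext l
    change push (push l _) _ = push (push l _) _
    simp [push]

/-- The right action of `M_1` on reversed words. -/
def act : Mn 1 →* (Function.End (List (Letter 1)))ᵐᵒᵖ :=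
  (Mcon 1).lift pushHom mcon_le_ker_pushHom

/-- The reversal of the left normal form of an element of `M_1`. -/
def revNormalForm (p : Mn 1) : List (Letter 1) :=
  (act p).unop []

theorem revNormalForm_one : revNormalForm 1 = [] := by
  simp [revNormalForm, Function.End.one_def]

theorem revNormalForm_mul_gen (p : Mn 1) (x : Letter 1) :
    revNormalForm (p * gen x) = push (revNormalForm p) x := by
  rw [revNormalForm, map_mul]
  rfl

theorem word_append {n : ℕ} (v w : List (Letter n)) : word (v ++ w) = word v * word w := by
  simp [word, FreeMonoid.ofList_append]

theorem mk_eq_of_rel {n : ℕ} {v w : FreeMonoid (Letter n)} (h : rel n v w) : mk n v = mk n w :=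
  (Con.eq _).2 (ConGen.Rel.of _ _ h)

theorem word_reverse_push (l : List (Letter 1)) (x : Letter 1) :
    word (push l x).reverse = word l.reverse * gen x := by
  have hx : gen x = word [x] := rfl
  rw [hx, ← word_append]
  unfold push
  split
  · rename_i i l j
    obtain rfl := Subsingleton.elim i 0
    obtain rfl := Subsingleton.elim j 0
    simp only [List.reverse_cons, List.append_assoc, word_append _ ([_] ++ [_])]
    exact congrArg _ (mk_eq_of_rel (.da Nat.one_pos))
  · simp only [List.reverse_cons, List.append_assoc, word_append _ ([_] ++ [_])]
    exact congrArg _ (mk_eq_of_rel (.An Nat.one_pos))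
  · rename_i i l j
    obtain rfl := Subsingleton.elim i 0
    obtain rfl := Subsingleton.elim j 0
    simp only [List.reverse_cons, List.append_assoc, word_append _ ([_] ++ [_])]
    exact congrArg _ (mk_eq_of_rel (.cb Nat.one_pos))
  · simp

theorem induction_mul_gen {n : ℕ} {motive : Mn n → Prop} (p : Mn n) (one : motive 1)
    (mul_gen : ∀ p x, motive p → motive (p * gen x)) : motive p := by
  obtain ⟨w, rfl⟩ : ∃ w : List (Letter n), word w = p := Con.mk'_surjective p
  induction w using List.reverseRecOn with
  | nil => exact one
  | append_singleton w x ih =>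
    rw [word_append]
    exact mul_gen _ x ih

theorem word_reverse_revNormalForm (p : Mn 1) : word (revNormalForm p).reverse = p := by
  induction p using induction_mul_gen with
  | one => rw [revNormalForm_one]; rfl
  | mul_gen p x ih => rw [revNormalForm_mul_gen, word_reverse_push, ih]

theorem revNormalForm_injective : Function.Injective revNormalForm :=
  Function.LeftInverse.injective (g := fun l : List (Letter 1) => word l.reverse) word_reverse_revNormalForm

theorem leftNormal_reverse_push {l : List (Letter 1)} (hl : LeftNormal l.reverse)
    (x : Letter 1) : LeftNormal (push l x).reverse := by
  change List.IsChain _ _ at hl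
  change List.IsChain _ _
  rw [List.isChain_reverse] at *
  unfold push
  split
  · rename_i l _
    cases l <;> simp_all [List.isChain_cons_cons, inR]
  · rename_i l
    cases l <;> simp_all [List.isChain_cons_cons, inR]
  · rename_i l _
    cases l <;> simp_all [List.isChain_cons_cons, inR]
  · rcases l with _ | ⟨y, l⟩
    · simp
    · refine List.isChain_cons_cons.2 ⟨?_, hl⟩
      cases y <;> cases x <;> simp_all [inR]

theorem leftNormal_reverse_revNormalForm (p : Mn 1) : LeftNormal (revNormalForm p).reverse := by
  induction p using induction_mul_gen with
  | one => rw [revNormalForm_one]; exact List.isChain_nil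
  | mul_gen p x ih => rw [revNormalForm_mul_gen]; exact leftNormal_reverse_push ih x

theorem isIntersectionBase_of_revNormalForm {v : Mn 1} {x y : Letter 1} {l : List (Letter 1)}
    (hv : revNormalForm v = y :: x :: l) (hxy : inL x y) : IsIntersectionBase v := by
  have hrev : l.reverse ++ [x, y] = (revNormalForm v).reverse := by simp [hv]
  refine ⟨l.reverse, x, y, ?_, ?_, hxy⟩
  · rw [hrev]
    exact leftNormal_reverse_revNormalForm v
  · rw [hrev, word_reverse_revNormalForm]

theorem push_eq_push {k l : List (Letter 1)} (hkl : k ≠ l) {x y : Letter 1}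
    (h : push k x = push l y) :
    ∃ t, ((k = .A 0 :: t ∨ k = .d :: t) ∧
        (push k x = .a :: .d :: t ∨ push k x = .D 0 :: .A 0 :: t)) ∨
      ((k = .B 0 :: t ∨ k = .c :: t) ∧ push k x = .b :: .c :: t) := by
  have hA (i : Fin 1) : Letter.A i = .A 0 := congrArg _ (Subsingleton.elim i 0)
  have hB (i : Fin 1) : Letter.B i = .B 0 := congrArg _ (Subsingleton.elim i 0)
  unfold push at h ⊢
  split at h <;> split at h <;> grind

/-- in `M_1`, three common one-letter extensions give at most two
distinct intersection bases. -/
theorem M1_two_intersection_bases (p q : Mn 1) (hp : p ≠ 1) (hq : q ≠ 1)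
    (hpq : p ≠ q) (x y w z u v : Letter 1) (v₁ v₂ v₃ : Mn 1)
    (h1x : v₁ = p * gen x) (h1y : v₁ = q * gen y)
    (h2w : v₂ = p * gen w) (h2z : v₂ = q * gen z)
    (h3u : v₃ = p * gen u) (h3v : v₃ = q * gen v) :
    IsIntersectionBase v₁ ∧ IsIntersectionBase v₂ ∧ IsIntersectionBase v₃ ∧
    (v₁ = v₃ ∨ v₂ = v₃ ∨ v₁ = v₂) := by
  have hne : revNormalForm p ≠ revNormalForm q := revNormalForm_injective.ne hpq
  have key {v : Mn 1} {x y : Letter 1} (hx : v = p * gen x) (hy : v = q * gen y) :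
      ∃ t, ((revNormalForm p = .A 0 :: t ∨ revNormalForm p = .d :: t) ∧
          (revNormalForm v = .a :: .d :: t ∨ revNormalForm v = .D 0 :: .A 0 :: t)) ∨
        ((revNormalForm p = .B 0 :: t ∨ revNormalForm p = .c :: t) ∧
          revNormalForm v = .b :: .c :: t) := by
    have h := push_eq_push hne (x := x) (y := y)
    rw [← revNormalForm_mul_gen, ← revNormalForm_mul_gen, ← hx, ← hy] at h
    exact h rfl
  have base {v : Mn 1} {x y : Letter 1} (hx : v = p * gen x) (hy : v = q * gen y) :
      IsIntersectionBase v := by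
    obtain ⟨t, ⟨-, h | h⟩ | ⟨-, h⟩⟩ := key hx hy <;>
      exact isIntersectionBase_of_revNormalForm h (by simp [inL])
  refine ⟨base h1x h1y, base h2w h2z, base h3u h3v, ?_⟩
  obtain ⟨t₁, h₁⟩ := key h1x h1y
  obtain ⟨t₂, h₂⟩ := key h2w h2z
  obtain ⟨t₃, h₃⟩ := key h3u h3v
  simp only [← revNormalForm_injective.eq_iff]
  clear key base
  grind

end Malcev
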